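/- arXiv:2512.16283 — 2 statements merged into one kernel-verified Lean document; each statement's English description precedes it below -/
import Mathlib

section
/- Let σ > 2. Let k, k' : ℤ → ℕ be finitely supported, let Ṽ : ℤ → ℝ satisfy |Ṽ_n| ≤ 2 for all n, and assume |Σ_{n∈ℤ} (k_n − k'_n)(n² + Ṽ_n)| ≤ 1. Let (n_i)_{i≥1} be an enumeration of the finite multiset in which each n ∈ ℤ is repeated k_n + k'_n times, arranged so that |n₁| ≥ |n₂| ≥ |n₃| ≥ ⋯. Then Σ_{n∈ℤ} |k_n − k'_n|·ln^σ⌊n⌋ ≤ 3·4^σ·( Σ_{i≥3} ln^σ⌊n_i⌋ + ln^σ⌊m*(k,k')⌋ ), where Σ_{i≥3} denotes the sum over all entries of the multiset except two entries of largest absolute value. -/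
/-- `ln^σ⌊n⌋` for an integer `n`, where `⌊n⌋ = max{c, |n|}`. -/
noncomputable def lnZ (c σ : ℝ) (n : ℤ) : ℝ := Real.log (max c |(n : ℝ)|) ^ σ

/-- `ln^σ⌊m⌋` for a natural number `m`, where `⌊m⌋ = max{c, m}`. -/
noncomputable def lnN (c σ : ℝ) (m : ℕ) : ℝ := Real.log (max c (m : ℝ)) ^ σ

/-- The finite multiset in which each `|n|` (`n ∈ ℤ`) is repeated `kₙ + k'ₙ` times;
its decreasing rearrangement is the sequence `(|n₁|, |n₂|, …)` with `|n₁| ≥ |n₂| ≥ ⋯`. -/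
def reps2 (k k' : ℤ →₀ ℕ) : Multiset ℕ :=
  (k.support ∪ k'.support).val.bind
    (fun n => Multiset.replicate (k n + k' n) n.natAbs)

/-- The decreasing rearrangement of a finite multiset of naturals. -/
def descList (M : Multiset ℕ) : List ℕ := (M.sort (· ≤ ·)).reverse

/-- The momentum `m(k,k') = ∑ₙ (kₙ - k'ₙ)·n` of finitely supported `k, k' : ℤ → ℕ`. -/
def momentum (k k' : ℤ →₀ ℕ) : ℤ :=
  ∑ n ∈ k.support ∪ k'.support, ((k n : ℤ) - (k' n : ℤ)) * n

/-!
Attach the sign `+1` to the modes counted by `k` and `-1` to those counted by `k'`, and split the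
signed modes into the two largest ones `u` and the remaining ones `t`. If the modes in `u` cancel,
they do not contribute to `k - k'` and the left-hand side is at most the weight of `t`. Otherwise
each mode in `u` is bounded by the larger absolute value of the signed sums of `n` and `n²` over
`u`, since distinct integers `a`, `b` satisfy `|a| ≤ max |a - b| |a² - b²|`. The momentum controls
the first sum and the small-divisor condition the second, up to the cubes `⌊n⌋ ^ 3` of the momentum
and of the modes in `t`. Subadditivity of `ln ^ σ` turns the bound by a sum of cubes into one by
`3 ^ σ` times the weights of `t` and the momentum.
-/

section ModeArithmetic

lemma abs_le_max_abs_sub_abs_sq_sub_sq {R : Type*} [CommRing R] [LinearOrder R]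
    [IsStrictOrderedRing R] {a b : R} (h : 1 ≤ |a - b|) : |a| ≤ max |a - b| |a ^ 2 - b ^ 2| := by
  have h_add : |a + b| ≤ |a ^ 2 - b ^ 2| := by
    rw [sq_sub_sq, abs_mul]
    exact le_mul_of_one_le_right (abs_nonneg _) h
  have h_two : 2 * |a| ≤ |a - b| + |a + b| := by
    calc 2 * |a| = |(a - b) + (a + b)| := by rw [← abs_two, ← abs_mul]; congr 1; ring
      _ ≤ |a - b| + |a + b| := abs_add_le _ _
  linarith [le_max_left |a - b| |a ^ 2 - b ^ 2|, le_max_right |a - b| |a ^ 2 - b ^ 2|]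

lemma abs_cast_le_max_of_not_cancel {a b : ℤ} {e f : ℤˣ} (h : ¬(a = b ∧ e = -f)) :
    |(a : ℝ)| ≤ max |((e : ℤ) : ℝ) * a + ((f : ℤ) : ℝ) * b|
      |((e : ℤ) : ℝ) * (a : ℝ) ^ 2 + ((f : ℤ) : ℝ) * (b : ℝ) ^ 2| := by
  have h_same : |(a : ℝ)| ≤ |(a : ℝ) ^ 2 + (b : ℝ) ^ 2| := by
    have h_sq : |(a : ℝ)| ≤ (a : ℝ) ^ 2 := by
      rw [← sq_abs]
      rcases eq_or_ne a 0 with rfl | ha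
      · simp
      · exact le_self_pow₀ (mod_cast Int.one_le_abs ha) two_ne_zero
    exact (h_sq.trans (le_add_of_nonneg_right (sq_nonneg _))).trans (le_abs_self _)
  have h_opp (hab : a ≠ b) :
      |(a : ℝ)| ≤ max |(a : ℝ) - b| |(a : ℝ) ^ 2 - (b : ℝ) ^ 2| :=
    abs_le_max_abs_sub_abs_sq_sub_sq (mod_cast Int.one_le_abs (sub_ne_zero.2 hab))
  rcases Int.units_eq_one_or e with rfl | rfl <;> rcases Int.units_eq_one_or f with rfl | rfl
  · simpa using Or.inr h_same
  · simpa [← sub_eq_add_neg] using h_opp (by simpa using h)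
  · simpa [neg_add_eq_sub, abs_sub_comm] using h_opp (by simpa using h)
  · rw [← abs_neg ((((-1 : ℤˣ) : ℤ) : ℝ) * (a : ℝ) ^ 2 + _)]
    simpa [add_comm] using Or.inr h_same

end ModeArithmetic

section SignedModes

/-- A mode `n` together with a sign: `+1` if it is counted by `k` and `-1` if it is counted
by `k'`. -/
abbrev SignedMode := ℤ × ℤˣ

/-- The sum of `g n` over a multiset of signed modes, each taken with its sign. For `g n = n` it is
the momentum, for `g n = n ^ 2 + V n` the divisor. -/
def signedSum (g : ℤ → ℝ) (S : Multiset SignedMode) : ℝ :=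
  (S.map fun p => ((p.2 : ℤ) : ℝ) * g p.1).sum

/-- The number of times the mode `n` occurs in `S`, counted with signs; it corresponds to
`kₙ - k'ₙ`. It is real-valued since it serves as a coefficient of real weights. -/
def charge (S : Multiset SignedMode) (n : ℤ) : ℝ := signedSum (Pi.single n 1) S

/-- The modes of `k` with sign `+1` and those of `k'` with sign `-1`. -/
noncomputable def signedModes (k k' : ℤ →₀ ℕ) : Multiset SignedMode :=
  (Finsupp.toMultiset k).map (·, 1) + (Finsupp.toMultiset k').map (·, -1)

@[simp]
lemma signedSum_zero (g : ℤ → ℝ) : signedSum g 0 = 0 := by simp [signedSum]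

@[simp]
lemma signedSum_cons (g : ℤ → ℝ) (p : SignedMode) (S : Multiset SignedMode) :
    signedSum g (p ::ₘ S) = ((p.2 : ℤ) : ℝ) * g p.1 + signedSum g S := by simp [signedSum]

@[simp]
lemma signedSum_singleton (g : ℤ → ℝ) (p : SignedMode) :
    signedSum g {p} = ((p.2 : ℤ) : ℝ) * g p.1 := by simp [signedSum]

@[simp]
lemma signedSum_add (g : ℤ → ℝ) (S T : Multiset SignedMode) :
    signedSum g (S + T) = signedSum g S + signedSum g T := by simp [signedSum]

lemma charge_add (S T : Multiset SignedMode) : charge (S + T) = charge S + charge T := by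
  funext n
  simp [charge]

lemma signedSum_fun_add (g h : ℤ → ℝ) (S : Multiset SignedMode) :
    signedSum (fun n => g n + h n) S = signedSum g S + signedSum h S := by
  simp [signedSum, mul_add]

lemma abs_signedSum_le {g w : ℤ → ℝ} (h : ∀ n, |g n| ≤ w n) (S : Multiset SignedMode) :
    |signedSum g S| ≤ (S.map fun p => w p.1).sum := by
  refine Multiset.abs_sum_le_sum_abs.trans ?_
  rw [Multiset.map_map]
  refine Multiset.sum_map_le_sum_map _ _ fun p _ => ?_
  rw [Function.comp_apply, abs_mul, abs_unit_intCast, one_mul]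
  exact h p.1

lemma sum_abs_charge_mul_le {w : ℤ → ℝ} (hw : ∀ n, 0 ≤ w n) (s : Finset ℤ)
    (S : Multiset SignedMode) :
    ∑ n ∈ s, |charge S n| * w n ≤ (S.map fun p => w p.1).sum := by
  induction S using Multiset.induction with
  | empty => simp [charge]
  | cons p S ih =>
    have h_triangle (n : ℤ) :
        |charge (p ::ₘ S) n| * w n ≤ (if p.1 = n then w n else 0) + |charge S n| * w n := by
      have h_abs : |charge (p ::ₘ S) n| ≤ (if p.1 = n then 1 else 0) + |charge S n| := by
        rw [charge, signedSum_cons]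
        refine (abs_add_le _ _).trans_eq ?_
        rw [abs_mul, abs_unit_intCast, one_mul, Pi.single_apply]
        split_ifs <;> simp [charge]
      calc |charge (p ::ₘ S) n| * w n
          ≤ ((if p.1 = n then 1 else 0) + |charge S n|) * w n :=
            mul_le_mul_of_nonneg_right h_abs (hw n)
        _ = _ := by rw [add_mul, ite_mul, one_mul, zero_mul]
    calc ∑ n ∈ s, |charge (p ::ₘ S) n| * w n
        ≤ ∑ n ∈ s, ((if p.1 = n then w n else 0) + |charge S n| * w n) :=
          Finset.sum_le_sum fun n _ => h_triangle n
      _ = (if p.1 ∈ s then w p.1 else 0) + ∑ n ∈ s, |charge S n| * w n := by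
          rw [Finset.sum_add_distrib, Finset.sum_ite_eq]
      _ ≤ w p.1 + (S.map fun p => w p.1).sum := by
          refine add_le_add ?_ ih
          split_ifs
          exacts [le_rfl, hw _]
      _ = ((p ::ₘ S).map fun p => w p.1).sum := by simp

lemma charge_eq_zero_or_abs_le_max {u : Multiset SignedMode} (hu : u.card ≤ 2) :
    charge u = 0 ∨ ∀ p ∈ u, |(p.1 : ℝ)| ≤
      max |signedSum (fun n => (n : ℝ)) u| |signedSum (fun n => (n : ℝ) ^ 2) u| := by
  obtain h | h | h : u.card = 0 ∨ u.card = 1 ∨ u.card = 2 := by omega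
  · rw [Multiset.card_eq_zero.1 h]
    simp
  · obtain ⟨p, rfl⟩ := Multiset.card_eq_one.1 h
    simp [abs_mul, abs_unit_intCast]
  · obtain ⟨⟨a, e⟩, ⟨b, f⟩, rfl⟩ := Multiset.card_eq_two.1 h
    by_cases h_cancel : a = b ∧ e = -f
    · obtain ⟨rfl, rfl⟩ := h_cancel
      left
      funext n
      simp [charge]
    · right
      have h_cancel' : ¬(b = a ∧ f = -e) := fun ⟨hb, hf⟩ => h_cancel ⟨hb.symm, by simp [hf]⟩
      have ha := abs_cast_le_max_of_not_cancel h_cancel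
      have hb := abs_cast_le_max_of_not_cancel h_cancel'
      rw [add_comm, add_comm (_ * (b : ℝ) ^ 2)] at hb
      simpa using ⟨by simpa using ha, by simpa using hb⟩

lemma sum_map_toMultiset {α M : Type*} [AddCommMonoid M] {f : α →₀ ℕ} {s : Finset α}
    (hs : f.support ⊆ s) (g : α → M) :
    ((Finsupp.toMultiset f).map g).sum = ∑ a ∈ s, f a • g a := by
  classical
  rw [Finset.sum_multiset_map_count, Finsupp.toFinset_toMultiset]
  simp only [Finsupp.count_toMultiset]
  refine Finset.sum_subset hs fun a _ ha => ?_
  rw [Finsupp.notMem_support_iff.1 ha, zero_smul]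

variable (k k' : ℤ →₀ ℕ)

lemma signedSum_signedModes (g : ℤ → ℝ) :
    signedSum g (signedModes k k') =
      ∑ n ∈ k.support ∪ k'.support, ((k n : ℝ) - (k' n : ℝ)) * g n := by
  rw [signedSum, signedModes, Multiset.map_add, Multiset.sum_add, Multiset.map_map,
    Multiset.map_map, sum_map_toMultiset Finset.subset_union_left,
    sum_map_toMultiset Finset.subset_union_right, ← Finset.sum_add_distrib]
  refine Finset.sum_congr rfl fun n _ => ?_
  simp only [Function.comp_apply, nsmul_eq_mul, Units.val_one, Units.val_neg, Int.cast_one,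
    Int.cast_neg]
  ring

lemma charge_signedModes {n : ℤ} (hn : n ∈ k.support ∪ k'.support) :
    charge (signedModes k k') n = (k n : ℝ) - (k' n : ℝ) := by
  rw [charge, signedSum_signedModes, Finset.sum_eq_single_of_mem n hn]
  · simp
  · intro a _ ha
    simp [ha]

lemma signedSum_signedModes_eq_momentum :
    signedSum (fun n => (n : ℝ)) (signedModes k k') = momentum k k' := by
  rw [signedSum_signedModes, momentum]
  push_cast
  rfl

lemma map_natAbs_signedModes :
    (signedModes k k').map (fun p => p.1.natAbs) = reps2 k k' := by
  rw [← Multiset.sum_map_singleton ((signedModes k k').map _), Multiset.map_map, signedModes,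
    Multiset.map_add, Multiset.sum_add, Multiset.map_map, Multiset.map_map,
    sum_map_toMultiset Finset.subset_union_left, sum_map_toMultiset Finset.subset_union_right,
    ← Finset.sum_add_distrib]
  simp only [Function.comp_apply, Multiset.nsmul_singleton, ← Multiset.replicate_add]
  rfl

end SignedModes

section Enumeration

lemma multiset_map_eq_add_iff {α β : Type*} {f : α → β} {S : Multiset α} {M₁ M₂ : Multiset β} :
    S.map f = M₁ + M₂ ↔ ∃ S₁ S₂, S₁.map f = M₁ ∧ S₂.map f = M₂ ∧ S = S₁ + S₂ := by
  rw [← Multiset.rel_eq, Multiset.rel_map_left, Multiset.rel_add_right]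
  simp only [← Multiset.rel_map_left, Multiset.rel_eq]

lemma coe_descList (M : Multiset ℕ) : (descList M : Multiset ℕ) = M := by
  rw [descList, Multiset.coe_reverse, Multiset.sort_eq]

lemma exists_signedModes_eq_add (k k' : ℤ →₀ ℕ) :
    ∃ u t, signedModes k k' = u + t ∧ u.card ≤ 2 ∧
      t.map (fun p => p.1.natAbs) = ((descList (reps2 k k')).drop 2 : Multiset ℕ) := by
  have h_split : (signedModes k k').map (fun p => p.1.natAbs) =
      ((descList (reps2 k k')).take 2 : Multiset ℕ) + ((descList (reps2 k k')).drop 2) := by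
    rw [Multiset.coe_add, List.take_append_drop, coe_descList, map_natAbs_signedModes]
  obtain ⟨u, t, hu, ht, h_eq⟩ := multiset_map_eq_add_iff.1 h_split
  refine ⟨u, t, h_eq, ?_, ht⟩
  rw [← Multiset.card_map (fun p : SignedMode => p.1.natAbs), hu, Multiset.coe_card]
  exact List.length_take_le _ _

end Enumeration

section LogWeights

variable {c σ : ℝ}

lemma lnZ_nonneg (hc : 1 ≤ c) (n : ℤ) : 0 ≤ lnZ c σ n :=
  Real.rpow_nonneg (Real.log_nonneg (hc.trans (le_max_left _ _))) _

lemma sum_lnZ_nonneg {α : Type*} (hc : 1 ≤ c) (f : α → ℤ) (M : Multiset α) :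
    0 ≤ (M.map fun a => lnZ c σ (f a)).sum :=
  Multiset.sum_nonneg (Multiset.forall_mem_map_iff.2 fun _ _ => lnZ_nonneg hc _)

lemma lnN_natAbs (n : ℤ) : lnN c σ n.natAbs = lnZ c σ n := by
  rw [lnN, lnZ, Nat.cast_natAbs, Int.cast_abs]

lemma log_pow_rpow {x : ℝ} (hx : 1 ≤ x) (d : ℕ) :
    Real.log (x ^ d) ^ σ = (d : ℝ) ^ σ * Real.log x ^ σ := by
  rw [Real.log_pow, Real.mul_rpow d.cast_nonneg (Real.log_nonneg hx)]

lemma log_add_rpow_le_of_half (hc : 1 ≤ c)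
    (hsub : ∀ x y : ℝ, c ≤ y → y ≤ x →
      Real.log (x + y) ^ σ ≤ Real.log x ^ σ + (1 / 2) * Real.log y ^ σ)
    (x y : ℝ) (hx : c ≤ x) (hy : c ≤ y) :
    Real.log (x + y) ^ σ ≤ Real.log x ^ σ + Real.log y ^ σ := by
  wlog hyx : y ≤ x generalizing x y
  · rw [add_comm x, add_comm (Real.log x ^ σ)]
    exact this y x hy hx (le_of_not_ge hyx)
  have h_nonneg : 0 ≤ Real.log y ^ σ := Real.rpow_nonneg (Real.log_nonneg (hc.trans hy)) _
  linarith [hsub x y hy hyx]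

lemma lnZ_le_of_abs_le_sum_pow (hσ : 0 ≤ σ) (hc : 1 ≤ c)
    (hsub : ∀ x y : ℝ, c ≤ x → c ≤ y →
      Real.log (x + y) ^ σ ≤ Real.log x ^ σ + Real.log y ^ σ)
    {d : ℕ} (hd : d ≠ 0) {M : Multiset ℤ} (hM : M ≠ 0) {n : ℤ}
    (hn : |(n : ℝ)| ≤ (M.map fun r : ℤ => max c |(r : ℝ)| ^ d).sum) :
    lnZ c σ n ≤ (d : ℝ) ^ σ * (M.map (lnZ c σ)).sum := by
  set P := M.map fun r : ℤ => max c |(r : ℝ)| ^ d with hP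
  have h_one (r : ℤ) : 1 ≤ max c |(r : ℝ)| := hc.trans (le_max_left _ _)
  have h_mem : ∀ x ∈ P, c ≤ x := by
    intro x hx
    obtain ⟨r, -, rfl⟩ := Multiset.mem_map.1 hx
    exact (le_max_left _ _).trans (le_self_pow₀ (h_one r) hd)
  have h_sum : c ≤ P.sum := by
    obtain ⟨x, hx⟩ := Multiset.exists_mem_of_ne_zero (mt Multiset.map_eq_zero.1 hM : P ≠ 0)
    exact (h_mem x hx).trans (Multiset.single_le_sum (fun y hy => by linarith [h_mem y hy]) x hx)
  calc lnZ c σ n ≤ Real.log P.sum ^ σ :=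
        Real.rpow_le_rpow (Real.log_nonneg (h_one n))
          (Real.log_le_log (by linarith [h_one n]) (max_le h_sum hn)) hσ
    _ ≤ (P.map fun x => Real.log x ^ σ).sum :=
        Multiset.le_sum_nonempty_of_subadditive_on_pred (fun x => Real.log x ^ σ) (c ≤ ·) hsub
          (fun x y hx hy => by linarith) P (mt Multiset.map_eq_zero.1 hM) h_mem
    _ = (d : ℝ) ^ σ * (M.map (lnZ c σ)).sum := by
        simp only [hP, Multiset.map_map, Function.comp_apply, log_pow_rpow (h_one _),
          Multiset.sum_map_mul_left]
        rfl

end LogWeights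

section Counting

variable {c : ℝ}

lemma sq_add_two_le_pow_three {a : ℝ} (ha : 2 ≤ a) : a ^ 2 + 2 ≤ a ^ 3 := by
  nlinarith [mul_le_mul_of_nonneg_left ha (sq_nonneg a)]

lemma abs_le_max_pow_three (hc : 1 ≤ c) (n : ℤ) : |(n : ℝ)| ≤ max c |(n : ℝ)| ^ 3 :=
  (le_max_right _ _).trans (le_self_pow₀ (hc.trans (le_max_left _ _)) three_ne_zero)

lemma abs_sq_add_le_max_pow_three (hc : 2 ≤ c) {v : ℝ} (hv : |v| ≤ 2) (n : ℤ) :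
    |(n : ℝ) ^ 2 + v| ≤ max c |(n : ℝ)| ^ 3 := by
  have h_sq : (n : ℝ) ^ 2 ≤ max c |(n : ℝ)| ^ 2 := by
    rw [← sq_abs]
    exact pow_le_pow_left₀ (abs_nonneg _) (le_max_right _ _) 2
  calc |(n : ℝ) ^ 2 + v| ≤ |(n : ℝ) ^ 2| + |v| := abs_add_le _ _
    _ ≤ max c |(n : ℝ)| ^ 2 + 2 := by rw [abs_sq]; exact add_le_add h_sq hv
    _ ≤ max c |(n : ℝ)| ^ 3 := sq_add_two_le_pow_three (hc.trans (le_max_left _ _))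

variable {u t : Multiset SignedMode} {m : ℤ}

lemma abs_signedSum_id_le (hc : 1 ≤ c) (hm : signedSum (fun n => (n : ℝ)) (u + t) = m) :
    |signedSum (fun n => (n : ℝ)) u| ≤
      |(m : ℝ)| + (t.map fun p => max c |(p.1 : ℝ)| ^ 3).sum := by
  have h_eq : signedSum (fun n => (n : ℝ)) u = m - signedSum (fun n => (n : ℝ)) t := by
    rw [← hm, signedSum_add, add_sub_cancel_right]
  rw [h_eq]
  exact (abs_sub _ _).trans
    (add_le_add_right (abs_signedSum_le (abs_le_max_pow_three hc) t) _)

lemma abs_signedSum_sq_le (hc : 2 ≤ c) {V : ℤ → ℝ} (hV : ∀ n, |V n| ≤ 2) (hu : u.card ≤ 2)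
    (hsmall : |signedSum (fun n => (n : ℝ) ^ 2 + V n) (u + t)| ≤ 1) :
    |signedSum (fun n => (n : ℝ) ^ 2) u| ≤
      5 + (t.map fun p => max c |(p.1 : ℝ)| ^ 3).sum := by
  have h_tail := abs_signedSum_le (fun n => abs_sq_add_le_max_pow_three hc (hV n) n) t
  have h_potential : |signedSum V u| ≤ 4 := by
    have h_card : (u.card : ℝ) ≤ 2 := mod_cast hu
    have h_le := abs_signedSum_le hV u
    rw [Multiset.map_const', Multiset.sum_replicate, nsmul_eq_mul] at h_le
    linarith
  rw [signedSum_add, signedSum_fun_add] at hsmall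
  rw [abs_le] at hsmall h_tail h_potential ⊢
  constructor <;> linarith

lemma abs_le_of_charge_ne_zero (hc : 2 ≤ c) {V : ℤ → ℝ} (hV : ∀ n, |V n| ≤ 2)
    (hu : u.card ≤ 2) (hm : signedSum (fun n => (n : ℝ)) (u + t) = m)
    (hsmall : |signedSum (fun n => (n : ℝ) ^ 2 + V n) (u + t)| ≤ 1) (h_charge : charge u ≠ 0)
    {p : SignedMode} (hp : p ∈ u) :
    |(p.1 : ℝ)| ≤ max c |(m : ℝ)| ^ 3 + (t.map fun p => max c |(p.1 : ℝ)| ^ 3).sum := by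
  have hc_one : 1 ≤ c := one_le_two.trans hc
  have h_five : 5 ≤ max c |(m : ℝ)| ^ 3 := by
    have h_two : 2 ≤ max c |(m : ℝ)| := hc.trans (le_max_left _ _)
    nlinarith [sq_add_two_le_pow_three h_two]
  refine ((charge_eq_zero_or_abs_le_max hu).resolve_left h_charge p hp).trans (max_le ?_ ?_)
  · linarith [abs_signedSum_id_le hc_one hm, abs_le_max_pow_three hc_one m]
  · linarith [abs_signedSum_sq_le hc hV hu hsmall]

theorem sum_abs_charge_mul_lnZ_le {σ : ℝ} (hσ : 0 ≤ σ) (hc : 2 ≤ c)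
    (hsub : ∀ x y : ℝ, c ≤ x → c ≤ y →
      Real.log (x + y) ^ σ ≤ Real.log x ^ σ + Real.log y ^ σ)
    {V : ℤ → ℝ} (hV : ∀ n, |V n| ≤ 2) (hu : u.card ≤ 2)
    (hm : signedSum (fun n => (n : ℝ)) (u + t) = m)
    (hsmall : |signedSum (fun n => (n : ℝ) ^ 2 + V n) (u + t)| ≤ 1) (s : Finset ℤ) :
    ∑ n ∈ s, |charge (u + t) n| * lnZ c σ n ≤
      (2 * 3 ^ σ + 1) * ((t.map fun p => lnZ c σ p.1).sum + lnZ c σ m) := by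
  have hc_one : 1 ≤ c := one_le_two.trans hc
  have h_nonneg : ∀ n, 0 ≤ lnZ c σ n := lnZ_nonneg hc_one
  set W := (t.map fun p => lnZ c σ p.1).sum with hW
  have hW_nonneg : 0 ≤ W := sum_lnZ_nonneg hc_one _ t
  have h_large_nonneg : 0 ≤ 3 ^ σ * (W + lnZ c σ m) :=
    mul_nonneg (by positivity) (add_nonneg hW_nonneg (h_nonneg m))
  by_cases h_cancel : charge u = 0
  · rw [charge_add, h_cancel, zero_add]
    linarith [sum_abs_charge_mul_le h_nonneg s t, h_nonneg m]
  · have h_weight : ∀ p ∈ u, lnZ c σ p.1 ≤ 3 ^ σ * (W + lnZ c σ m) := by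
      intro p hp
      have h_abs := abs_le_of_charge_ne_zero hc hV hu hm hsmall h_cancel hp
      have h_lnZ := lnZ_le_of_abs_le_sum_pow (M := m ::ₘ t.map Prod.fst) hσ hc_one hsub
        three_ne_zero (Multiset.cons_ne_zero) (by simpa using h_abs)
      simpa [add_comm, hW] using h_lnZ
    have h_u : (u.map fun p => lnZ c σ p.1).sum ≤ 2 * (3 ^ σ * (W + lnZ c σ m)) := by
      have h_card := Multiset.sum_le_card_nsmul (u.map fun p => lnZ c σ p.1) _
        (Multiset.forall_mem_map_iff.2 h_weight)
      rw [Multiset.card_map, nsmul_eq_mul] at h_card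
      exact h_card.trans (mul_le_mul_of_nonneg_right (mod_cast hu) h_large_nonneg)
    have h_total := sum_abs_charge_mul_le h_nonneg s (u + t)
    rw [Multiset.map_add, Multiset.sum_add] at h_total
    linarith [h_nonneg m]

lemma two_mul_three_rpow_add_one_le {σ : ℝ} (hσ : 0 ≤ σ) :
    2 * (3 : ℝ) ^ σ + 1 ≤ 3 * 4 ^ σ := by
  have h_mono : (3 : ℝ) ^ σ ≤ 4 ^ σ := Real.rpow_le_rpow (by norm_num) (by norm_num) hσ
  linarith [Real.one_le_rpow (by norm_num : (1 : ℝ) ≤ 4) hσ]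

end Counting

theorem full_dim_KAM_stmt3_general {σ c : ℝ} (hσ : 0 ≤ σ) (hc : 2 ≤ c)
    (hsub : ∀ x y : ℝ, c ≤ x → c ≤ y →
      Real.log (x + y) ^ σ ≤ Real.log x ^ σ + Real.log y ^ σ)
    (k k' : ℤ →₀ ℕ) {V : ℤ → ℝ} (hV : ∀ n, |V n| ≤ 2)
    (hsmall : |∑ n ∈ k.support ∪ k'.support,
        ((k n : ℝ) - (k' n : ℝ)) * ((n : ℝ) ^ 2 + V n)| ≤ 1) :
    ∑ n ∈ k.support ∪ k'.support, |(k n : ℝ) - (k' n : ℝ)| * lnZ c σ n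
      ≤ 3 * (4 : ℝ) ^ σ *
        ((((descList (reps2 k k')).drop 2).map (lnN c σ)).sum
          + lnN c σ (momentum k k').natAbs) := by
  obtain ⟨u, t, h_split, hu, ht⟩ := exists_signedModes_eq_add k k'
  have h_tail : (((descList (reps2 k k')).drop 2).map (lnN c σ)).sum =
      (t.map fun p => lnZ c σ p.1).sum := by
    rw [← Multiset.sum_coe, ← Multiset.map_coe, ← ht, Multiset.map_map]
    simp only [Function.comp_apply, lnN_natAbs]
  have h_momentum := signedSum_signedModes_eq_momentum k k'
  rw [← signedSum_signedModes k k' fun n => (n : ℝ) ^ 2 + V n] at hsmall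
  rw [h_split] at h_momentum hsmall
  rw [h_tail, lnN_natAbs]
  have hc_one : 1 ≤ c := one_le_two.trans hc
  calc ∑ n ∈ k.support ∪ k'.support, |(k n : ℝ) - (k' n : ℝ)| * lnZ c σ n
      = ∑ n ∈ k.support ∪ k'.support, |charge (u + t) n| * lnZ c σ n :=
        Finset.sum_congr rfl fun n hn => by rw [← h_split, charge_signedModes k k' hn]
    _ ≤ _ := sum_abs_charge_mul_lnZ_le hσ hc hsub hV hu h_momentum hsmall _
    _ ≤ _ := mul_le_mul_of_nonneg_right (two_mul_three_rpow_add_one_le hσ)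
        (add_nonneg (sum_lnZ_nonneg hc_one _ t) (lnZ_nonneg hc_one _))

/-- Lemma 5.2 of the paper, the small-divisor counting lemma.
If `|Ṽₙ| ≤ 2` for all `n` and `|∑ₙ (kₙ - k'ₙ)(n² + Ṽₙ)| ≤ 1`, then
`∑ₙ |kₙ - k'ₙ|·ln^σ⌊n⌋ ≤ 3·4^σ·( ∑_{i≥3} ln^σ⌊nᵢ⌋ + ln^σ⌊m*(k,k')⌋ )`, where `(nᵢ)` enumerates
the multiset with each `n` repeated `kₙ + k'ₙ` times, ordered by decreasing `|nᵢ|`, and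
`∑_{i≥3}` omits two entries of largest absolute value. -/
theorem full_dim_KAM_stmt3 (σ : ℝ) (hσ : 2 < σ) (c : ℝ) (hc : Real.exp 1 ≤ c)
    (hsub : ∀ x y : ℝ, c ≤ y → y ≤ x →
      Real.log (x + y) ^ σ ≤ Real.log x ^ σ + (1 / 2) * Real.log y ^ σ)
    (k k' : ℤ →₀ ℕ) (V : ℤ → ℝ) (hV : ∀ n, |V n| ≤ 2)
    (hsmall : |∑ n ∈ k.support ∪ k'.support,
        ((k n : ℝ) - (k' n : ℝ)) * ((n : ℝ) ^ 2 + V n)| ≤ 1) :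
    ∑ n ∈ k.support ∪ k'.support, |(k n : ℝ) - (k' n : ℝ)| * lnZ c σ n
      ≤ 3 * (4 : ℝ) ^ σ *
        ((((descList (reps2 k k')).drop 2).map (lnN c σ)).sum
          + lnN c σ (momentum k k').natAbs) := by
  have hc_two : 2 ≤ c := by linarith [Real.add_one_le_exp (1 : ℝ)]
  exact full_dim_KAM_stmt3_general (zero_le_two.trans hσ.le) hc_two
    (log_add_rpow_le_of_half (one_le_two.trans hc_two) hsub) k k' hV hsmall
end

section
/- Let σ > 2 and δ ∈ (0,1). Let a, k, k' : ℤ → ℕ be finitely supported and not all zero, let (n_i*)_{i≥1} be the decreasing rearrangement of the finite multiset in which each |n| (n ∈ ℤ) is repeated 2a_n + k_n + k'_n times. Then Π_{n∈ℤ}(1 + a_n) · exp( −δ·( Σ_{n∈ℤ}(2a_n + k_n + k'_n)·ln^σ⌊n⌋ − 2·ln^σ⌊n₁*⌋ + ln^σ⌊m*(k,k')⌋ ) ) ≤ exp( 3·(4/δ)^{1/(σ−1)}·exp( (4/δ)^{1/σ} ) ). -/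
/-- The finite multiset in which each `|n|` (`n ∈ ℤ`) is repeated `2aₙ + kₙ + k'ₙ` times. -/
def reps (a k k' : ℤ →₀ ℕ) : Multiset ℕ :=
  (a.support ∪ k.support ∪ k'.support).val.bind
    (fun n => Multiset.replicate (2 * a n + k n + k' n) n.natAbs)

/-!
Write `L(n) = ln^σ⌊n⌋` and let `E` be the quantity multiplied by `-δ`. Removing one copy of `n₁*`
from the multiset and adding `m*` leaves a multiset `S` with `n₁* ≤ ∑ S` by the triangle
inequality, and `E = ∑ L(S) - L(n₁*)`. Adding the elements of `S` one by one to the largest one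
`x`, half-subadditivity gives `E ≥ ½ ∑ L(S \ x)`. Each `n` in the support of `a` contributes
`2 aₙ` copies, at most two copies in all were removed, and `m*` or a removed copy accounts for a
spare `L(0)`; hence `E ≥ ∑ aₙ L(n) - L(N) + ½ L(0)`, where `|N|` is maximal on the support of `a`.

It remains to bound `∑ (ln(1 + aₙ) - δ aₙ L(n))`, with `a_N` lowered by one at the cost of a factor
`2`. Maximising over `aₙ`, each term is at most `ln⁺(1 / (δ L(n)))`. With `v = (4/δ)^{1/σ}` this
vanishes unless `ln⌊n⌋ < v`, which leaves at most `2 eᵛ + 1` integers, and then it is at most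
`σ v / ln⌊n⌋ ≤ v`, because half-subadditivity at `x = y = c` forces `σ ≤ ln c`.
-/

/-- The condition defining the constant `c(σ)`, for `f = ln^σ` on `ℝ`. Over `ℕ` with `c = 0` it is
the form in which the weight `m ↦ ln^σ⌊m⌋` is used. -/
def HalfSubadditiveFrom {α : Type*} [Add α] [LE α] (c : α) (f : α → ℝ) : Prop :=
  ∀ x y, c ≤ y → y ≤ x → f (x + y) ≤ f x + (1 / 2) * f y

lemma sum_map_le_sum_map_of_le {ι : Type*} {f : ι → ℝ} (hf : ∀ i, 0 ≤ f i) {A M : Multiset ι}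
    (hAM : A ≤ M) : (A.map f).sum ≤ (M.map f).sum := by
  obtain ⟨R, rfl⟩ := Multiset.le_iff_exists_add.1 hAM
  rw [Multiset.map_add, Multiset.sum_add]
  exact le_add_of_nonneg_right (Multiset.sum_nonneg (by simpa using fun i _ ↦ hf i))

lemma sum_map_sub_le_sum_map_erase {ι : Type*} [DecidableEq ι] {f : ι → ℝ} {A : Multiset ι}
    {B : ℝ} (hfB : ∀ i ∈ A, f i ≤ B) (hB : 0 ≤ B) (i : ι) :
    (A.map f).sum - B ≤ ((A.erase i).map f).sum := by
  by_cases hi : i ∈ A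
  · linarith [Multiset.sum_map_erase (f := f) hi, hfB i hi]
  · rw [Multiset.erase_of_notMem hi]
    linarith

namespace HalfSubadditiveFrom

lemma comp_max_natCast {c : ℝ} {f : ℝ → ℝ} (h : HalfSubadditiveFrom c f)
    (hf : MonotoneOn f (Set.Ici c)) (hc : 0 ≤ c) :
    HalfSubadditiveFrom 0 fun n : ℕ ↦ f (max c n) := by
  intro x y _ hyx
  have hx := le_max_left c (x : ℝ)
  have hy := le_max_left c (y : ℝ)
  have hadd : max c ((x + y : ℕ) : ℝ) ≤ max c x + max c y := by
    push_cast
    exact max_le (by linarith) (add_le_add (le_max_right ..) (le_max_right ..))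
  calc f (max c ((x + y : ℕ) : ℝ)) ≤ f (max c x + max c y) :=
        hf (Set.mem_Ici.2 (le_max_left ..)) (Set.mem_Ici.2 (by linarith)) hadd
    _ ≤ f (max c x) + 1 / 2 * f (max c y) :=
        h _ _ hy (max_le_max le_rfl (Nat.cast_le.2 hyx))

section Weight

variable {α : Type*} [AddCommMonoid α] [LinearOrder α] [CanonicallyOrderedAdd α]
  {w : α → ℝ} (hw : HalfSubadditiveFrom 0 w) (hmono : Monotone w)

include hw

lemma map_add_sum_le {x : α} {S : Multiset α} (hS : ∀ y ∈ S, y ≤ x) :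
    w (x + S.sum) ≤ w x + 1 / 2 * (S.map w).sum := by
  induction S using Multiset.induction_on with
  | empty => simp
  | cons y S ih =>
    obtain ⟨hyx, hSx⟩ := Multiset.forall_mem_cons.1 hS
    have hadd := hw (x + S.sum) y zero_le (hyx.trans le_self_add)
    rw [Multiset.sum_cons, Multiset.map_cons, Multiset.sum_cons, add_comm y, ← add_assoc]
    linarith [ih hSx]

include hmono

lemma nonneg (x : α) : 0 ≤ w x := by
  have hzero := hw 0 0 le_rfl le_rfl
  rw [add_zero] at hzero
  linarith [hmono (zero_le (a := x))]

lemma exists_half_sum_erase_le {S : Multiset α} (hS : S ≠ 0) {p : α} (hp : p ≤ S.sum) :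
    ∃ x ∈ S, 1 / 2 * ((S.erase x).map w).sum ≤ (S.map w).sum - w p := by
  obtain ⟨x, hx, hmax⟩ := Multiset.exists_max_image id hS
  have hpx : p ≤ x + (S.erase x).sum := by rwa [Multiset.sum_erase hx]
  have hle := hw.map_add_sum_le (x := x) (S := S.erase x) fun y hy ↦
    hmax y (Multiset.mem_of_mem_erase hy)
  exact ⟨x, hx, by linarith [hmono hpx, Multiset.sum_map_erase (f := w) hx]⟩

variable {M : Multiset α} {p m : α} (hp : p ∈ M) (hpm : p ≤ m + (M.erase p).sum)

include hp hpm

lemma exists_half_sum_cons_erase_erase_le :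
    ∃ x, 1 / 2 * (((m ::ₘ M.erase p).erase x).map w).sum ≤ (M.map w).sum - 2 * w p + w m := by
  obtain ⟨x, -, hx⟩ := hw.exists_half_sum_erase_le hmono (S := m ::ₘ M.erase p) (p := p)
    Multiset.cons_ne_zero (by rwa [Multiset.sum_cons])
  rw [Multiset.map_cons, Multiset.sum_cons] at hx
  exact ⟨x, by linarith [Multiset.sum_map_erase (f := w) hp]⟩

lemma sum_sub_two_mul_add_nonneg : 0 ≤ (M.map w).sum - 2 * w p + w m := by
  obtain ⟨x, hx⟩ := hw.exists_half_sum_cons_erase_erase_le hmono hp hpm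
  have hrest := sum_map_le_sum_map_of_le (hw.nonneg hmono)
    (Multiset.zero_le ((m ::ₘ M.erase p).erase x))
  rw [Multiset.map_zero, Multiset.sum_zero] at hrest
  linarith

lemma sum_map_sub_two_mul_add_le {A : Multiset α} (hAM : A ≤ M) {B : ℝ}
    (hB : ∀ x ∈ A, w x ≤ B) (hB0 : w 0 ≤ B) :
    (A.map w).sum - 2 * B + w 0 ≤ 2 * ((M.map w).sum - 2 * w p + w m) := by
  obtain ⟨x, hx⟩ := hw.exists_half_sum_cons_erase_erase_le hmono hp hpm
  have hnonneg := hw.nonneg hmono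
  have hAp := sum_map_sub_le_sum_map_erase hB ((hnonneg 0).trans hB0) p
  have hAM_erase := Multiset.erase_le_erase p hAM
  suffices (A.map w).sum - 2 * B + w 0 ≤ (((m ::ₘ M.erase p).erase x).map w).sum by linarith
  obtain rfl | hmx := eq_or_ne m x
  · rw [Multiset.erase_cons_head]
    linarith [sum_map_le_sum_map_of_le hnonneg hAM_erase]
  · have hApx := sum_map_sub_le_sum_map_erase
      (fun y hy ↦ hB y (Multiset.mem_of_mem_erase hy)) ((hnonneg 0).trans hB0) x (A := A.erase p)
    rw [Multiset.erase_cons_tail _ hmx, Multiset.map_cons, Multiset.sum_cons]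
    linarith [sum_map_le_sum_map_of_le hnonneg (Multiset.erase_le_erase x hAM_erase),
      hmono (zero_le (a := m))]

end Weight

end HalfSubadditiveFrom

section Reps

variable (a k k' : ℤ →₀ ℕ)

lemma reps_eq_map_toMultiset :
    reps a k k' = (Finsupp.toMultiset (2 • a + k + k')).map Int.natAbs := by
  have hsupp : (2 • a + k + k').support ⊆ a.support ∪ k.support ∪ k'.support := by
    intro n
    simp only [Finsupp.mem_support_iff, Finset.mem_union, Finsupp.add_apply, Finsupp.smul_apply]
    grind
  rw [Finsupp.toMultiset_map, Finsupp.toMultiset_apply, Finsupp.sum_mapDomain_index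
    (by simp) (by simp [add_nsmul]), Finsupp.sum_of_support_subset _ hsupp _ (by simp)]
  simp only [Multiset.nsmul_singleton, Finsupp.add_apply, Finsupp.smul_apply, smul_eq_mul]
  rfl

lemma mem_reps {p : ℕ} : p ∈ reps a k k' ↔ ∃ n : ℤ, 2 * a n + k n + k' n ≠ 0 ∧ n.natAbs = p := by
  simp only [reps_eq_map_toMultiset, Multiset.mem_map, Finsupp.mem_toMultiset,
    Finsupp.mem_support_iff, Finsupp.add_apply, Finsupp.smul_apply, smul_eq_mul]

variable {a k k'} in
lemma reps_ne_zero (h : ¬(a = 0 ∧ k = 0 ∧ k' = 0)) : reps a k k' ≠ 0 := by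
  contrapose! h
  have hzero (n : ℤ) : 2 * a n + k n + k' n = 0 := by
    by_contra hn
    simpa [h] using (mem_reps a k k').2 ⟨n, hn, rfl⟩
  refine ⟨?_, ?_, ?_⟩ <;> ext n <;> simp only [Finsupp.zero_apply] <;> grind

lemma reps_zero_zero_le : reps a 0 0 ≤ reps a k k' := by
  rw [reps_eq_map_toMultiset, reps_eq_map_toMultiset, add_zero, add_zero, add_assoc]
  exact Multiset.map_le_map (Finsupp.toMultiset_strictMono.monotone le_self_add)

lemma sum_map_reps {R : Type*} [NonAssocSemiring R] (w : ℕ → R) :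
    ((reps a k k').map w).sum =
      ∑ n ∈ a.support ∪ k.support ∪ k'.support, ((2 * a n + k n + k' n : ℕ) : R) * w n.natAbs := by
  simp only [reps, Multiset.map_bind, Multiset.sum_bind, Multiset.map_replicate,
    Multiset.sum_replicate, nsmul_eq_mul]
  rfl

lemma momentum_eq_sum {s : Finset ℤ} (hk : k.support ⊆ s) (hk' : k'.support ⊆ s) :
    momentum k k' = ∑ n ∈ s, ((k n : ℤ) - k' n) * n := by
  refine Finset.sum_subset (Finset.union_subset hk hk') fun n _ hn ↦ ?_
  simp only [Finset.mem_union, Finsupp.mem_support_iff, not_or, not_not] at hn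
  simp [hn]

end Reps

lemma abs_add_le_abs_sum_add_sum {ι G : Type*} [AddCommGroup G] [LinearOrder G]
    [IsOrderedAddMonoid G] {s : Finset ι} {f g : ι → G} (h : ∀ i ∈ s, |f i| ≤ g i) {i : ι}
    (hi : i ∈ s) : |f i| + g i ≤ |∑ j ∈ s, f j| + ∑ j ∈ s, g j := by
  classical
  have hrest : |∑ j ∈ s.erase i, f j| ≤ ∑ j ∈ s.erase i, g j :=
    (Finset.abs_sum_le_sum_abs ..).trans
      (Finset.sum_le_sum fun j hj ↦ h j (Finset.mem_of_mem_erase hj))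
  rw [← Finset.add_sum_erase s g hi]
  calc |f i| + g i = |∑ j ∈ s, f j - ∑ j ∈ s.erase i, f j| + g i := by
        rw [← Finset.add_sum_erase s f hi, add_sub_cancel_right]
    _ ≤ |∑ j ∈ s, f j| + ∑ j ∈ s.erase i, g j + g i := by
        gcongr
        exact (abs_sub _ _).trans (by gcongr)
    _ = |∑ j ∈ s, f j| + (g i + ∑ j ∈ s.erase i, g j) := by abel

lemma le_natAbs_momentum_add_sum_erase {a k k' : ℤ →₀ ℕ} {p : ℕ} (hp : p ∈ reps a k k') :
    p ≤ (momentum k k').natAbs + ((reps a k k').erase p).sum := by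
  obtain ⟨n, hn, rfl⟩ := (mem_reps a k k').1 hp
  set U := a.support ∪ k.support ∪ k'.support with hU
  have hnU : n ∈ U := by
    simp only [hU, Finset.mem_union, Finsupp.mem_support_iff]
    omega
  have hterm (i : ℤ) : |((k i : ℤ) - k' i) * i| ≤ ((2 * a i + k i + k' i : ℕ) : ℤ) * |i| := by
    rw [abs_mul]
    gcongr
    grind
  have hmult : 2 * |n| ≤ |((k n : ℤ) - k' n) * n| + ((2 * a n + k n + k' n : ℕ) : ℤ) * |n| := by
    rw [abs_mul, ← add_mul]
    gcongr
    grind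
  have hreps : ((reps a k k').sum : ℤ) = ∑ i ∈ U, ((2 * a i + k i + k' i : ℕ) : ℤ) * |i| := by
    simpa [hU] using congrArg (Nat.cast (R := ℤ)) (sum_map_reps a k k' id)
  have htriangle := abs_add_le_abs_sum_add_sum (fun i _ ↦ hterm i) hnU
  rw [← momentum_eq_sum k k' (by grind) (by grind), ← hreps] at htriangle
  have hbound := hmult.trans htriangle
  rw [Int.abs_eq_natAbs, Int.abs_eq_natAbs] at hbound
  have herase := Multiset.sum_erase hp
  omega

lemma log_one_add_le_mul_add_posLog_inv {t b : ℝ} (ht : 0 < t) (hb : 0 ≤ b) :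
    Real.log (1 + b) ≤ t * b + Real.posLog t⁻¹ := by
  obtain ht1 | ht1 := le_total 1 t
  · calc Real.log (1 + b) ≤ 1 + b - 1 := Real.log_le_sub_one_of_pos (by positivity)
      _ ≤ t * b := by nlinarith
      _ ≤ t * b + Real.posLog t⁻¹ := le_add_of_nonneg_right Real.posLog_nonneg
  · have hlog := Real.log_le_sub_one_of_pos (show 0 < t * (1 + b) by positivity)
    rw [Real.log_mul ht.ne' (by positivity)] at hlog
    have hpos : Real.log t⁻¹ ≤ Real.posLog t⁻¹ := le_max_right _ _
    rw [Real.log_inv] at hpos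
    linarith

lemma sum_log_one_add_le {ι : Type*} {s : Finset ι} {a t : ι → ℝ} {i₀ : ι} (hi₀ : i₀ ∈ s)
    (ha₀ : 1 ≤ a i₀) (ha : ∀ i ∈ s, 0 ≤ a i) (ht : ∀ i ∈ s, 0 < t i) :
    ∑ i ∈ s, Real.log (1 + a i) ≤
      Real.log 2 + ∑ i ∈ s, Real.posLog (t i)⁻¹ + (∑ i ∈ s, t i * a i - t i₀) := by
  classical
  have hrest : ∑ i ∈ s.erase i₀, Real.log (1 + a i) ≤
      ∑ i ∈ s.erase i₀, (t i * a i + Real.posLog (t i)⁻¹) :=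
    Finset.sum_le_sum fun i hi ↦ log_one_add_le_mul_add_posLog_inv
      (ht i (Finset.mem_of_mem_erase hi)) (ha i (Finset.mem_of_mem_erase hi))
  have hhead : Real.log (1 + a i₀) ≤
      Real.log 2 + (t i₀ * (a i₀ - 1) + Real.posLog (t i₀)⁻¹) := by
    calc Real.log (1 + a i₀) ≤ Real.log (2 * (1 + (a i₀ - 1))) :=
          Real.log_le_log (by linarith) (by linarith)
      _ = Real.log 2 + Real.log (1 + (a i₀ - 1)) :=
          Real.log_mul two_ne_zero (by linarith)
      _ ≤ _ := by
          gcongr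
          exact log_one_add_le_mul_add_posLog_inv (ht i₀ hi₀) (by linarith)
  rw [Finset.sum_add_distrib] at hrest
  rw [← Finset.add_sum_erase _ _ hi₀, ← Finset.add_sum_erase s (fun i ↦ Real.posLog (t i)⁻¹) hi₀,
    ← Finset.add_sum_erase s (fun i ↦ t i * a i) hi₀]
  linarith

lemma posLog_inv_mul_rpow_le {σ δ x v : ℝ} (hσ : 0 ≤ σ) (hx : 0 < x) (hσx : σ ≤ x) (hv : 0 < v)
    (hδ : 1 ≤ δ * v ^ σ) : Real.posLog (δ * x ^ σ)⁻¹ ≤ if x < v then v else 0 := by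
  have hδ0 : 0 < δ := pos_of_mul_pos_left (one_pos.trans_le hδ) (by positivity)
  split_ifs with hxv
  · refine max_le hv.le ?_
    calc Real.log (δ * x ^ σ)⁻¹ ≤ Real.log ((v / x) ^ σ) := by
          refine Real.log_le_log (by positivity) ?_
          rw [Real.div_rpow hv.le hx.le, inv_le_iff_one_le_mul₀ (by positivity)]
          field_simp
          rwa [mul_comm]
      _ = σ * Real.log (v / x) := Real.log_rpow (by positivity) _
      _ ≤ x * (v / x) := by
          gcongr
          · exact Real.log_nonneg ((one_le_div hx).2 hxv.le)
          · exact Real.log_le_self (by positivity)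
      _ = v := mul_div_cancel₀ v hx.ne'
  · have hge : 1 ≤ δ * x ^ σ := hδ.trans (by gcongr; exact not_lt.1 hxv)
    refine ((Real.posLog_eq_zero_iff _).2 ?_).le
    rw [abs_of_nonneg (by positivity)]
    exact inv_le_one_of_one_le₀ hge

lemma card_filter_abs_le (s : Finset ℤ) {r : ℝ} (hr : 0 ≤ r) :
    ((s.filter fun n : ℤ ↦ |(n : ℝ)| ≤ r).card : ℝ) ≤ 2 * r + 1 := by
  have hsub : (s.filter fun n : ℤ ↦ |(n : ℝ)| ≤ r) ⊆ Finset.Icc (-⌊r⌋) ⌊r⌋ := by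
    intro n hn
    have habs : |n| ≤ ⌊r⌋ := Int.le_floor.2 (by exact_mod_cast (Finset.mem_filter.1 hn).2)
    exact Finset.mem_Icc.2 (abs_le.1 habs)
  have hfloor := Int.floor_nonneg.2 hr
  have hcard : ((s.filter fun n : ℤ ↦ |(n : ℝ)| ≤ r).card : ℤ) ≤ 2 * ⌊r⌋ + 1 := by
    have := Finset.card_le_card hsub
    rw [Int.card_Icc] at this
    omega
  calc ((s.filter fun n : ℤ ↦ |(n : ℝ)| ≤ r).card : ℝ) ≤ 2 * ⌊r⌋ + 1 := by exact_mod_cast hcard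
    _ ≤ 2 * r + 1 := by linarith [Int.floor_le r]

lemma sum_ite_log_max_abs_lt_le (s : Finset ℤ) {c v : ℝ} (hc : 0 < c) (hv : 0 ≤ v) :
    ∑ n ∈ s, (if Real.log (max c |(n : ℝ)|) < v then v else 0) ≤
      if Real.log c < v then (2 * Real.exp v + 1) * v else 0 := by
  split_ifs with hcv
  · rw [← Finset.sum_filter, Finset.sum_const, nsmul_eq_mul]
    gcongr
    refine le_trans ?_ (card_filter_abs_le s (Real.exp_nonneg v))
    gcongr with n _
    intro hn
    exact (le_max_right _ _).trans ((Real.log_lt_iff_lt_exp (lt_max_of_lt_left hc)).1 hn).le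
  · refine Finset.sum_nonpos fun n _ ↦ ?_
    rw [if_neg fun h ↦ hcv ((Real.log_le_log hc (le_max_left _ _)).trans_lt h)]

section LogRpow

variable {c σ : ℝ}

lemma monotoneOn_log_rpow (hc : 1 ≤ c) (hσ : 0 ≤ σ) :
    MonotoneOn (fun x ↦ Real.log x ^ σ) (Set.Ici c) := by
  intro x hx y _ hxy
  have hx1 : 1 ≤ x := hc.trans hx
  exact Real.rpow_le_rpow (Real.log_nonneg hx1) (Real.log_le_log (by linarith) hxy) hσ

lemma one_lt_of_halfSubadditiveFrom_log_rpow (hσ : σ ≠ 0)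
    (h : HalfSubadditiveFrom c fun x ↦ Real.log x ^ σ) : 1 < c := by
  by_contra! hc
  have hone := h 1 1 hc le_rfl
  norm_num [Real.zero_rpow hσ] at hone
  exact hone.not_gt (by positivity)

lemma le_log_of_halfSubadditiveFrom_log_rpow (hσ : 1 ≤ σ)
    (h : HalfSubadditiveFrom c fun x ↦ Real.log x ^ σ) : σ ≤ Real.log c := by
  have hc := one_lt_of_halfSubadditiveFrom_log_rpow (by linarith) h
  have hlog : 0 < Real.log c := Real.log_pos hc
  have hdouble : Real.log (c + c) = Real.log c * (1 + Real.log 2 / Real.log c) := by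
    rw [← two_mul, Real.log_mul two_ne_zero (by linarith)]
    field_simp
    ring
  have hgrowth : (1 + Real.log 2 / Real.log c) ^ σ ≤ 1 + 1 / 2 := by
    have hself := h c c le_rfl le_rfl
    simp only [hdouble] at hself
    rw [Real.mul_rpow hlog.le (by positivity)] at hself
    exact le_of_mul_le_mul_left (by linarith) (Real.rpow_pos_of_pos hlog σ)
  have hbernoulli : 1 + σ * (Real.log 2 / Real.log c) ≤ (1 + Real.log 2 / Real.log c) ^ σ :=
    one_add_mul_self_le_rpow_one_add (by linarith [show 0 ≤ Real.log 2 / Real.log c by positivity])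
      hσ
  have hratio : σ * Real.log 2 ≤ 1 / 2 * Real.log c := by
    rw [← div_le_iff₀ hlog, mul_div_assoc]
    linarith
  nlinarith [Real.log_two_gt_d9]

lemma lnZ_eq_lnN_natAbs (c σ : ℝ) (n : ℤ) : lnZ c σ n = lnN c σ n.natAbs := by
  rw [lnZ, lnN, Nat.cast_natAbs, Int.cast_abs]

lemma lnN_zero (hc : 0 ≤ c) : lnN c σ 0 = Real.log c ^ σ := by
  rw [lnN, Nat.cast_zero, max_eq_left hc]

lemma lnN_mono (hc : 1 ≤ c) (hσ : 0 ≤ σ) : Monotone (lnN c σ) := fun _ _ hmn ↦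
  monotoneOn_log_rpow hc hσ (Set.mem_Ici.2 (le_max_left ..)) (Set.mem_Ici.2 (le_max_left ..))
    (max_le_max le_rfl (Nat.cast_le.2 hmn))

lemma halfSubadditiveFrom_lnN (hσ : 0 ≤ σ) (hc : 1 ≤ c)
    (h : HalfSubadditiveFrom c fun x ↦ Real.log x ^ σ) : HalfSubadditiveFrom 0 (lnN c σ) :=
  h.comp_max_natCast (monotoneOn_log_rpow hc hσ) (by linarith)

lemma sum_posLog_inv_mul_lnZ_le {δ v : ℝ} (hσ : 0 < σ) (hσc : σ ≤ Real.log c) (hc : 0 < c)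
    (hv : 0 < v) (hδ : 1 ≤ δ * v ^ σ) (s : Finset ℤ) :
    ∑ n ∈ s, Real.posLog (δ * lnZ c σ n)⁻¹ ≤
      if Real.log c < v then (2 * Real.exp v + 1) * v else 0 := by
  refine le_trans (Finset.sum_le_sum fun n _ ↦ ?_)
    (sum_ite_log_max_abs_lt_le s hc hv.le)
  have hσn : σ ≤ Real.log (max c |(n : ℝ)|) :=
    hσc.trans (Real.log_le_log hc (le_max_left ..))
  exact posLog_inv_mul_rpow_le hσ.le (hσ.trans_le hσn) hσn hv hδ

lemma log_two_add_sum_posLog_le {δ : ℝ} (hσ : 1 ≤ σ) (hσc : σ ≤ Real.log c) (hc : 0 < c)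
    (hδ : 0 < δ) (s : Finset ℤ) :
    Real.log 2 + ∑ n ∈ s, Real.posLog (δ * lnZ c σ n)⁻¹ ≤
      δ * (1 / 2 * Real.log c ^ σ) + 3 * (4 / δ) ^ (1 / σ) * Real.exp ((4 / δ) ^ (1 / σ)) := by
  set v := (4 / δ) ^ (1 / σ)
  have hv : 0 < v := by positivity
  have hvσ : δ * v ^ σ = 4 := by
    rw [← Real.rpow_mul (by positivity), one_div_mul_cancel (by linarith), Real.rpow_one,
      mul_div_cancel₀ _ hδ.ne']
  have hsum := sum_posLog_inv_mul_lnZ_le (by linarith) hσc (δ := δ) hc hv (by linarith) s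
  have hlog2 := Real.log_two_lt_d9
  split_ifs at hsum with hcv
  · have hexp : v + 1 ≤ v * Real.exp v := by nlinarith [Real.add_one_le_exp v]
    have hlog : 0 ≤ δ * (1 / 2 * Real.log c ^ σ) := by
      have hlogc : 0 ≤ Real.log c := by linarith
      positivity
    linarith
  · have hlog : δ * v ^ σ ≤ δ * Real.log c ^ σ := by
      gcongr
      exact not_lt.1 hcv
    have hrhs : 0 < 3 * v * Real.exp v := by positivity
    linarith

lemma prod_one_add_le_exp {δ : ℝ} (hσ : 1 ≤ σ) (hσc : σ ≤ Real.log c) (hc : 0 < c) (hδ : 0 < δ)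
    {a : ℤ →₀ ℕ} {N : ℤ} (hN : N ∈ a.support) :
    ∏ n ∈ a.support, (1 + (a n : ℝ)) ≤
      Real.exp (δ * (∑ n ∈ a.support, a n * lnZ c σ n - lnZ c σ N + 1 / 2 * Real.log c ^ σ) +
        3 * (4 / δ) ^ (1 / σ) * Real.exp ((4 / δ) ^ (1 / σ))) := by
  have hprod : ∏ n ∈ a.support, (1 + (a n : ℝ)) =
      Real.exp (∑ n ∈ a.support, Real.log (1 + (a n : ℝ))) := by
    rw [Real.exp_sum]
    exact Finset.prod_congr rfl fun n _ ↦ (Real.exp_log (by positivity)).symm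
  have hweight (n : ℤ) : 0 < lnZ c σ n :=
    Real.rpow_pos_of_pos (by linarith [Real.log_le_log hc (le_max_left c |(n : ℝ)|)]) σ
  have haN : (1 : ℝ) ≤ a N :=
    Nat.one_le_cast.2 (Nat.one_le_iff_ne_zero.2 (Finsupp.mem_support_iff.1 hN))
  have hsum := sum_log_one_add_le (t := fun n ↦ δ * lnZ c σ n) hN haN
    (fun n _ ↦ Nat.cast_nonneg (a n)) (fun n _ ↦ mul_pos hδ (hweight n))
  have hfactor : ∑ n ∈ a.support, δ * lnZ c σ n * a n =
      δ * ∑ n ∈ a.support, a n * lnZ c σ n := by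
    rw [Finset.mul_sum]
    exact Finset.sum_congr rfl fun n _ ↦ by ring
  rw [hprod, Real.exp_le_exp]
  linarith [log_two_add_sum_posLog_le hσ hσc hc hδ a.support]

end LogRpow

lemma headI_descList_mem {M : Multiset ℕ} (hM : M ≠ 0) : (descList M).headI ∈ M := by
  have hmem (x : ℕ) : x ∈ descList M ↔ x ∈ M := by
    rw [descList, List.mem_reverse, Multiset.mem_sort]
  have hnil : descList M ≠ [] := fun h ↦
    hM (Multiset.eq_zero_of_forall_notMem fun x ↦ by simp [← hmem, h])
  obtain ⟨x, l, hxl⟩ := List.exists_cons_of_ne_nil hnil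
  simp [← hmem, hxl]

lemma exists_sum_mul_sub_le {w : ℕ → ℝ} (hw : HalfSubadditiveFrom 0 w) (hmono : Monotone w)
    {a k k' : ℤ →₀ ℕ} (ha : a ≠ 0) {p : ℕ} (hp : p ∈ reps a k k') :
    ∃ N ∈ a.support, ∑ n ∈ a.support, a n * w n.natAbs - w N.natAbs + 1 / 2 * w 0 ≤
      ((reps a k k').map w).sum - 2 * w p + w (momentum k k').natAbs := by
  obtain ⟨N, hN, hmax⟩ := a.support.exists_max_image Int.natAbs (Finsupp.support_nonempty_iff.2 ha)
  have hbound : ∀ x ∈ reps a 0 0, w x ≤ w N.natAbs := fun x hx ↦ by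
    obtain ⟨n, hn, rfl⟩ := (mem_reps a 0 0).1 hx
    exact hmono (hmax n (by simpa using hn))
  have hsum : ((reps a 0 0).map w).sum = 2 * ∑ n ∈ a.support, a n * w n.natAbs := by
    rw [sum_map_reps, Finset.mul_sum]
    simp [mul_assoc]
  have hle := hw.sum_map_sub_two_mul_add_le hmono hp (le_natAbs_momentum_add_sum_erase hp)
    (reps_zero_zero_le a k k') hbound (hmono (Nat.zero_le _))
  exact ⟨N, hN, by linarith⟩

theorem full_dim_KAM_stmt11_general {σ δ c : ℝ} (hσ : 1 ≤ σ) (hδ : 0 < δ)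
    (hsub : HalfSubadditiveFrom c fun x ↦ Real.log x ^ σ)
    {a k k' : ℤ →₀ ℕ} (hne : ¬(a = 0 ∧ k = 0 ∧ k' = 0)) :
    (∏ n ∈ a.support, (1 + (a n : ℝ))) *
      Real.exp (-δ *
        ((∑ n ∈ a.support ∪ k.support ∪ k'.support,
            ((2 * a n + k n + k' n : ℕ) : ℝ) * lnZ c σ n)
          - 2 * lnN c σ (descList (reps a k k')).headI
          + lnN c σ (momentum k k').natAbs))
      ≤ Real.exp (3 * (4 / δ) ^ (1 / σ) * Real.exp ((4 / δ) ^ (1 / σ))) := by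
  have hc := one_lt_of_halfSubadditiveFrom_log_rpow (by linarith) hsub
  have hw := halfSubadditiveFrom_lnN (by linarith) hc.le hsub
  have hmono := lnN_mono hc.le (show 0 ≤ σ by linarith)
  have hhead := headI_descList_mem (reps_ne_zero hne)
  simp only [lnZ_eq_lnN_natAbs, ← sum_map_reps]
  obtain rfl | ha := eq_or_ne a 0
  · have hexcess := hw.sum_sub_two_mul_add_nonneg hmono hhead
      (le_natAbs_momentum_add_sum_erase hhead)
    rw [Finsupp.support_zero, Finset.prod_empty, one_mul, Real.exp_le_exp, neg_mul]
    exact (neg_nonpos.2 (mul_nonneg hδ.le hexcess)).trans (by positivity)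
  · obtain ⟨N, hN, hexcess⟩ := exists_sum_mul_sub_le hw hmono ha hhead
    have hprod := prod_one_add_le_exp hσ (le_log_of_halfSubadditiveFrom_log_rpow hσ hsub)
      (zero_lt_one.trans hc) hδ hN
    rw [lnN_zero (zero_le_one.trans hc.le)] at hexcess
    simp only [lnZ_eq_lnN_natAbs] at hprod
    refine (mul_le_mul_of_nonneg_right hprod (Real.exp_nonneg _)).trans ?_
    rw [← Real.exp_add, Real.exp_le_exp]
    linarith [mul_le_mul_of_nonneg_left hexcess hδ.le]

/-- inequality (59), proved in Lemma 3.1 of the paper.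
`∏ₙ(1 + aₙ) · exp(−δ·( ∑ₙ(2aₙ + kₙ + k'ₙ)·ln^σ⌊n⌋ − 2·ln^σ⌊n₁*⌋ + ln^σ⌊m*(k,k')⌋ ))
  ≤ exp( 3·(4/δ)^{1/(σ−1)}·exp((4/δ)^{1/σ}) )`.
(All factors with `aₙ = 0` equal `1`, so the product is taken over the support of `a`.) -/
theorem full_dim_KAM_stmt11 (σ δ : ℝ) (hσ : 2 < σ) (hδ : δ ∈ Set.Ioo (0 : ℝ) 1)
    (c : ℝ) (hc : Real.exp 1 ≤ c)
    (hsub : ∀ x y : ℝ, c ≤ y → y ≤ x →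
      Real.log (x + y) ^ σ ≤ Real.log x ^ σ + (1 / 2) * Real.log y ^ σ)
    (a k k' : ℤ →₀ ℕ) (hne : ¬(a = 0 ∧ k = 0 ∧ k' = 0)) :
    (∏ n ∈ a.support, (1 + (a n : ℝ))) *
      Real.exp (-δ *
        ((∑ n ∈ a.support ∪ k.support ∪ k'.support,
            ((2 * a n + k n + k' n : ℕ) : ℝ) * lnZ c σ n)
          - 2 * lnN c σ (descList (reps a k k')).headI
          + lnN c σ (momentum k k').natAbs))
      ≤ Real.exp (3 * (4 / δ) ^ (1 / (σ - 1)) * Real.exp ((4 / δ) ^ (1 / σ))) := by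
  have hbase : 1 ≤ 4 / δ := (one_le_div hδ.1).2 (by linarith [hδ.2])
  refine (full_dim_KAM_stmt11_general (by linarith) hδ.1 hsub hne).trans (Real.exp_le_exp.2 ?_)
  gcongr <;> linarith
end
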